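/- arXiv:2311.05940 — 2 statements merged into one kernel-verified Lean document; each statement's English description precedes it below -/
import Mathlib

section
/- Let C ≥ 0 and for each n ∈ ℕ let Q_n : [0,∞) → [0,C] be a nonincreasing function. Then there exists a strictly increasing map φ : ℕ → ℕ such that lim_{R→∞} limsup_{k→∞} ( Q_{φ(k)}(R) − Q_{φ(k)}(8R) ) = 0. -/
open Filter

/-- **Helly selection / concentration-function argument.** Given `C ≥ 0` and, for each `n`,
a nonincreasing function `Q_n : [0,∞) → [0,C]`, there is a subsequence `φ` along which
`limsup_k (Q_{φ(k)}(R) − Q_{φ(k)}(8R)) → 0` as `R → ∞`. -/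
theorem helly_concentration_selection (C : ℝ) (hC : 0 ≤ C) (Q : ℕ → ℝ → ℝ)
    (hmem : ∀ n, ∀ R : ℝ, 0 ≤ R → Q n R ∈ Set.Icc 0 C)
    (hmono : ∀ n, ∀ R₁ R₂ : ℝ, 0 ≤ R₁ → R₁ ≤ R₂ → Q n R₂ ≤ Q n R₁) :
    ∃ φ : ℕ → ℕ, StrictMono φ ∧
      Tendsto (fun R : ℝ => limsup (fun k => Q (φ k) R - Q (φ k) (8 * R)) atTop)
        atTop (nhds 0) := by
  obtain ⟨q, hq, φ, hφ, hlim⟩ :=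
    (isCompact_univ_pi fun _ : ℕ => isCompact_Icc (a := (0 : ℝ)) (b := C)).tendsto_subseq
      (x := fun n (m : ℕ) => Q n m) fun n m _ => hmem n m m.cast_nonneg
  rw [tendsto_pi_nhds] at hlim
  have hanti : Antitone q := fun a b hab =>
    le_of_tendsto_of_tendsto' (hlim b) (hlim a) fun k =>
      hmono (φ k) a b a.cast_nonneg (Nat.cast_le.2 hab)
  have hbdd : BddBelow (Set.range q) := ⟨0, by
    rintro _ ⟨m, rfl⟩
    exact (hq m trivial).1⟩
  have hqlim := tendsto_atTop_ciInf hanti hbdd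
  have hupper : Tendsto (fun R : ℝ => q ⌊R⌋₊ - q ⌈8 * R⌉₊) atTop (nhds 0) := by
    have h8 : Tendsto (fun R : ℝ => 8 * R) atTop atTop :=
      tendsto_id.const_mul_atTop (by norm_num)
    simpa using (hqlim.comp tendsto_nat_floor_atTop).sub
      (hqlim.comp (tendsto_nat_ceil_atTop.comp h8))
  refine ⟨φ, hφ, tendsto_of_tendsto_of_tendsto_of_le_of_le' tendsto_const_nhds hupper ?_ ?_⟩
  all_goals
    filter_upwards [eventually_ge_atTop 0] with R hR
    have hnonneg : ∀ k, 0 ≤ Q (φ k) R - Q (φ k) (8 * R) := fun k =>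
      sub_nonneg.2 (hmono _ _ _ hR (by linarith))
    have hle : ∀ k, Q (φ k) R - Q (φ k) (8 * R) ≤ Q (φ k) ⌊R⌋₊ - Q (φ k) ⌈8 * R⌉₊ := fun k =>
      sub_le_sub (hmono _ _ _ (Nat.cast_nonneg _) (Nat.floor_le hR))
        (hmono _ _ _ (by linarith) (Nat.le_ceil _))
    have htend := (hlim ⌊R⌋₊).sub (hlim ⌈8 * R⌉₊)
  · refine le_limsup_of_frequently_le (Frequently.of_forall hnonneg) ?_
    exact htend.isBoundedUnder_le.mono_le (Eventually.of_forall hle)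
  · rw [← htend.limsup_eq]
    exact limsup_le_limsup (Eventually.of_forall hle)
      (isBoundedUnder_of ⟨0, hnonneg⟩).isCoboundedUnder_le htend.isBoundedUnder_le
end

section
/- Let C ≥ 0 and for each n ∈ ℕ let Q_n : [0,∞) → [0,C] be a nonincreasing function. Then lim_{R→∞} liminf_{n→∞} ( Q_n(R) − Q_n(8R) ) = 0, i.e. for every ε > 0 there exists R₀ such that for all R ≥ R₀ one has liminf_{n→∞} ( Q_n(R) − Q_n(8R) ) < ε. -/
open Filter

/-- If `Q_n : [0,∞) → ℝ` are nonincreasing and the drops `Q_n(R) - Q_n(8R)` are, for arbitrarily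
large `R`, eventually larger than `δ`, then the total drop of `Q_n` over a suitable interval
`[0, R]` is eventually at least `K δ`. -/
lemma exists_eventually_mul_le_drop {Q : ℕ → ℝ → ℝ} {δ : ℝ}
    (hmono : ∀ n, ∀ R₁ R₂ : ℝ, 0 ≤ R₁ → R₁ ≤ R₂ → Q n R₂ ≤ Q n R₁)
    (hdrop : ∀ R₀ : ℝ, ∃ R ≥ R₀, ∀ᶠ n in atTop, δ < Q n R - Q n (8 * R)) (K : ℕ) :
    ∃ R : ℝ, 0 ≤ R ∧ ∀ᶠ n in atTop, K * δ ≤ Q n 0 - Q n R := by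
  induction K with
  | zero => exact ⟨0, le_rfl, by simp⟩
  | succ K ih =>
    obtain ⟨R, hR, hK⟩ := ih
    obtain ⟨S, hS, hδ⟩ := hdrop R
    refine ⟨8 * S, by linarith, ?_⟩
    filter_upwards [hK, hδ] with n h₁ h₂
    have := hmono n R S hR hS
    push_cast
    linarith

/-- **Quantitative concentration-function argument.** Given `C ≥ 0` and, for each `n`, a
nonincreasing function `Q_n : [0,∞) → [0,C]`, one has
`lim_{R→∞} liminf_{n→∞} (Q_n(R) − Q_n(8R)) = 0`; i.e. for every `ε > 0` there is `R₀` such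
that `liminf_{n→∞} (Q_n(R) − Q_n(8R)) < ε` for all `R ≥ R₀`. -/
theorem concentration_function_liminf_vanishes (C : ℝ) (hC : 0 ≤ C) (Q : ℕ → ℝ → ℝ)
    (hmem : ∀ n, ∀ R : ℝ, 0 ≤ R → Q n R ∈ Set.Icc 0 C)
    (hmono : ∀ n, ∀ R₁ R₂ : ℝ, 0 ≤ R₁ → R₁ ≤ R₂ → Q n R₂ ≤ Q n R₁) :
    Tendsto (fun R : ℝ => liminf (fun n => Q n R - Q n (8 * R)) atTop) atTop (nhds 0) ∧
    ∀ ε > (0 : ℝ), ∃ R₀ : ℝ, ∀ R ≥ R₀,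
      liminf (fun n => Q n R - Q n (8 * R)) atTop < ε := by
  have hnonneg : ∀ R : ℝ, 0 ≤ R → ∀ n, 0 ≤ Q n R - Q n (8 * R) := fun R hR n =>
    sub_nonneg.2 (hmono n R (8 * R) hR (by linarith))
  have hle : ∀ R : ℝ, 0 ≤ R → ∀ n, Q n R - Q n (8 * R) ≤ C := fun R hR n => by
    linarith [(hmem n R hR).2, (hmem n (8 * R) (by linarith)).1]
  have hsmall : ∀ ε > (0 : ℝ), ∃ R₀ : ℝ, ∀ R ≥ R₀,
      liminf (fun n => Q n R - Q n (8 * R)) atTop < ε := by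
    intro ε hε
    by_contra! hlarge
    have hdrop : ∀ R₀ : ℝ, ∃ R ≥ R₀, ∀ᶠ n in atTop, ε / 2 < Q n R - Q n (8 * R) := by
      intro R₀
      obtain ⟨R, hR, hlim⟩ := hlarge (max R₀ 0)
      refine ⟨R, (le_max_left _ _).trans hR, ?_⟩
      exact eventually_lt_of_lt_liminf (lt_of_lt_of_le (half_lt_self hε) hlim)
        (isBoundedUnder_of ⟨0, hnonneg R ((le_max_right _ _).trans hR)⟩)
    obtain ⟨K, hK⟩ := exists_nat_gt (C / (ε / 2))
    rw [div_lt_iff₀ (half_pos hε)] at hK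
    obtain ⟨R, hR, hev⟩ := exists_eventually_mul_le_drop hmono hdrop K
    obtain ⟨n, hn⟩ := hev.exists
    linarith [(hmem n 0 le_rfl).2, (hmem n R hR).1]
  refine ⟨tendsto_order.2 ⟨fun a ha => ?_, fun ε hε => ?_⟩, hsmall⟩
  · filter_upwards [eventually_ge_atTop 0] with R hR
    refine ha.trans_le (le_liminf_of_le ?_ (Eventually.of_forall (hnonneg R hR)))
    exact (isBoundedUnder_of ⟨C, hle R hR⟩ : IsBoundedUnder (· ≤ ·) atTop _).isCoboundedUnder_ge
  · obtain ⟨R₀, hR₀⟩ := hsmall ε hε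
    exact (eventually_ge_atTop R₀).mono hR₀
end
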